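/- arXiv:2003.07201 — 3 statements merged into one kernel-verified Lean document; each statement's English description precedes it below -/
import Mathlib

section
/- Let p be a mixing density, let Σ be a positive definite (n+1)×(n+1) real matrix with top-left n×n block Σ', and let μ ∈ ℝ^{n+1} with first n coordinates μ'. Define the (n+1)-dimensional density q(y) = |Σ|^{-1/2} ∫_0^∞ (ξ/(2π))^{(n+1)/2} e^{-ξ (y-μ)ᵀΣ⁻¹(y-μ)/2} p(ξ) dξ and the n-dimensional density q'(y') = |Σ'|^{-1/2} ∫_0^∞ (ξ/(2π))^{n/2} e^{-ξ (y'-μ')ᵀ(Σ')⁻¹(y'-μ')/2} p(ξ) dξ. Then for every y' ∈ ℝ^n, ∫_ℝ q(y', t) dt = q'(y'); i.e., the consistent elliptical density with scale matrix Σ marginalizes to the consistent elliptical density with scale matrix Σ'. -/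
open MeasureTheory Real Matrix

/-- The determinant is that of the top-left block times its Schur complement. -/
theorem det_eq_det_castSucc_mul_schur {n : ℕ} (S : Matrix (Fin (n + 1)) (Fin (n + 1)) ℝ)
    (h : IsUnit (S.submatrix Fin.castSucc Fin.castSucc).det) :
    S.det = (S.submatrix Fin.castSucc Fin.castSucc).det *
      (S (Fin.last n) (Fin.last n) - (fun j : Fin n => S (Fin.last n) j.castSucc) ⬝ᵥ
        ((S.submatrix Fin.castSucc Fin.castSucc)⁻¹ *ᵥ fun i : Fin n => S i.castSucc (Fin.last n))) := by
  set A := S.submatrix Fin.castSucc Fin.castSucc with hA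
  have : Invertible A := A.invertibleOfIsUnitDet h
  have hblocks : S.submatrix finSumFinEquiv finSumFinEquiv =
      fromBlocks A (of fun i (_ : Fin 1) => S i.castSucc (Fin.last n))
        (of fun (_ : Fin 1) j => S (Fin.last n) j.castSucc)
        (of fun _ _ => S (Fin.last n) (Fin.last n)) := by
    have hlast : ∀ i : Fin 1, Fin.natAdd n i = Fin.last n := by
      intro i
      ext
      simp
    ext (i | i) (j | j) <;> simp [hA, hlast] <;> rfl
  rw [← det_submatrix_equiv_self finSumFinEquiv S, hblocks, det_fromBlocks₁₁, det_fin_one,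
    invOf_eq_nonsing_inv, Matrix.mul_assoc]
  rfl

/-- Completing the square in the last coordinate of the inverse quadratic form. -/
theorem dotProduct_inv_mulVec_snoc {n : ℕ} {S : Matrix (Fin (n + 1)) (Fin (n + 1)) ℝ}
    (hS : S.IsHermitian) (hdet : IsUnit S.det)
    (h : IsUnit (S.submatrix Fin.castSucc Fin.castSucc).det) {b : Fin n → ℝ}
    (hb : ∀ i, b i = S i.castSucc (Fin.last n)) {s : ℝ}
    (hs : s = S (Fin.last n) (Fin.last n) -
      b ⬝ᵥ ((S.submatrix Fin.castSucc Fin.castSucc)⁻¹ *ᵥ b)) (hs0 : s ≠ 0)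
    (x : Fin n → ℝ) (u : ℝ) :
    (Fin.snoc x u : Fin (n + 1) → ℝ) ⬝ᵥ (S⁻¹ *ᵥ (Fin.snoc x u : Fin (n + 1) → ℝ)) =
      x ⬝ᵥ ((S.submatrix Fin.castSucc Fin.castSucc)⁻¹ *ᵥ x) +
        (u - b ⬝ᵥ ((S.submatrix Fin.castSucc Fin.castSucc)⁻¹ *ᵥ x)) ^ 2 / s := by
  set A := S.submatrix Fin.castSucc Fin.castSucc with hA
  set w := S⁻¹ *ᵥ (Fin.snoc x u : Fin (n + 1) → ℝ) with hw
  set v := w (Fin.last n) with hv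
  have hsym : ∀ i j, S i j = S j i := fun i j => by simpa using (hS.apply i j).symm
  have hSw : S *ᵥ w = (Fin.snoc x u : Fin (n + 1) → ℝ) := by
    rw [hw, mulVec_mulVec, mul_nonsing_inv S hdet, one_mulVec]
  have hhead : A *ᵥ (fun i => w i.castSucc) + v • b = x := by
    ext i
    have := congrFun hSw i.castSucc
    simp only [mulVec, dotProduct, Fin.sum_univ_castSucc, Fin.snoc_castSucc] at this
    simp only [Pi.add_apply, mulVec, dotProduct, Pi.smul_apply, smul_eq_mul, hA,
      submatrix_apply, hb]
    linarith
  have hlast : b ⬝ᵥ (fun i => w i.castSucc) + S (Fin.last n) (Fin.last n) * v = u := by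
    have := congrFun hSw (Fin.last n)
    simp only [mulVec, dotProduct, Fin.sum_univ_castSucc, Fin.snoc_last] at this
    simp only [dotProduct, hb]
    rw [← this]
    simp only [hsym (Fin.last n) (Fin.castSucc _), hv]
  have hw' : (fun i : Fin n => w i.castSucc) = A⁻¹ *ᵥ x - v • (A⁻¹ *ᵥ b) := by
    rw [← mulVec_smul, ← mulVec_sub, ← hhead, add_sub_cancel_right, mulVec_mulVec,
      nonsing_inv_mul A h, one_mulVec]
  have hAsym : A⁻¹ᵀ = A⁻¹ := by
    rw [transpose_nonsing_inv]
    congr 1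
    ext i j
    exact hsym _ _
  have hcomm : x ⬝ᵥ (A⁻¹ *ᵥ b) = b ⬝ᵥ (A⁻¹ *ᵥ x) := by
    rw [dotProduct_mulVec, dotProduct_comm, ← mulVec_transpose, hAsym]
  have hsplit : (Fin.snoc x u : Fin (n + 1) → ℝ) ⬝ᵥ w =
      x ⬝ᵥ (fun i => w i.castSucc) + u * v := by
    simp [dotProduct, Fin.sum_univ_castSucc, hv]
  rw [hw', dotProduct_sub, dotProduct_smul, smul_eq_mul] at hlast
  rw [hsplit, hw', dotProduct_sub, dotProduct_smul, smul_eq_mul, hcomm]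
  have hsv : u - b ⬝ᵥ (A⁻¹ *ᵥ x) = s * v := by
    rw [hs]
    linarith
  have hu : u = s * v + b ⬝ᵥ (A⁻¹ *ᵥ x) := by linarith
  rw [hsv, hu]
  field_simp
  ring

theorem exists_rpow_mul_exp_neg_le {a d : ℝ} (ha : 0 < a) (hd : 0 < d) :
    ∃ C, ∀ x, 0 ≤ x → x ^ a * exp (-(d * x)) ≤ C := by
  refine ⟨(a / d) ^ a, fun x hx => ?_⟩
  have hle : x ≤ a / d * exp (d * x / a) := by
    have := add_one_le_exp (d * x / a)
    calc x = a / d * (d * x / a) := by field_simp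
      _ ≤ _ := by gcongr; linarith
  calc x ^ a * exp (-(d * x)) ≤ (a / d * exp (d * x / a)) ^ a * exp (-(d * x)) := by gcongr
    _ = (a / d) ^ a := by
      rw [mul_rpow (by positivity) (by positivity), ← exp_mul, mul_assoc, ← exp_add]
      have : d * x / a * a + -(d * x) = 0 := by field_simp; ring
      rw [this, exp_zero, mul_one]

theorem integrableOn_rpow_mul_exp_mul {p : ℝ → ℝ} (hp : IntegrableOn p (Set.Ioi 0))
    {a d : ℝ} (ha : 0 < a) (hd : 0 < d) :
    IntegrableOn (fun ξ => (ξ / (2 * π)) ^ a * exp (-(ξ * d) / 2) * p ξ) (Set.Ioi 0) := by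
  obtain ⟨C, hC⟩ := exists_rpow_mul_exp_neg_le ha (mul_pos hd pi_pos)
  refine Integrable.bdd_mul (c := C) hp (by fun_prop) ?_
  filter_upwards [ae_restrict_mem measurableSet_Ioi] with ξ hξ
  have hξ : 0 < ξ := hξ
  rw [norm_of_nonneg (by positivity)]
  convert hC (ξ / (2 * π)) (by positivity) using 3
  field_simp

theorem lintegral_exp_neg_mul_sub_sq_div {ξ s : ℝ} (hξ : 0 < ξ) (hs : 0 < s) (c : ℝ) :
    ∫⁻ t : ℝ, ENNReal.ofReal (exp (-(ξ * ((t - c) ^ 2 / s)) / 2)) =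
      ENNReal.ofReal (√s * (ξ / (2 * π)) ^ (-(1 / 2) : ℝ)) := by
  have hexp : ∀ t : ℝ, exp (-(ξ * ((t - c) ^ 2 / s)) / 2) =
      exp (-(ξ / (2 * s)) * (t - c) ^ 2) := fun t => by
    congr 1
    field_simp
  simp_rw [hexp]
  rw [lintegral_sub_right_eq_self
      (fun t : ℝ => ENNReal.ofReal (exp (-(ξ / (2 * s)) * t ^ 2))) c,
    ← ofReal_integral_eq_lintegral_ofReal (integrable_exp_neg_mul_sq (by positivity))
      (ae_of_all _ fun t => (exp_pos _).le), integral_gaussian,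
    rpow_neg (by positivity), ← sqrt_eq_rpow, ← sqrt_inv, ← sqrt_mul hs.le]
  congr 2
  field_simp

/-- Integrating out a Gaussian variable with random precision `ξ / s` lowers the order of the
mixture by one half; both sides vanish when the right-hand mixture diverges. -/
theorem integral_gaussian_mixture {p : ℝ → ℝ} (hp_meas : Measurable p)
    (hp_nonneg : ∀ ξ, 0 ≤ p ξ) (hp : IntegrableOn p (Set.Ioi 0)) {k Q s : ℝ} (hk : 0 ≤ k)
    (hQ : 0 ≤ Q) (hs : 0 < s) (c : ℝ) :
    ∫ t : ℝ, ∫ ξ in Set.Ioi (0 : ℝ),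
        (ξ / (2 * π)) ^ (k + 1 / 2) * exp (-(ξ * (Q + (t - c) ^ 2 / s)) / 2) * p ξ =
      √s * ∫ ξ in Set.Ioi (0 : ℝ), (ξ / (2 * π)) ^ k * exp (-(ξ * Q) / 2) * p ξ := by
  set F : ℝ → ℝ → ℝ := fun t ξ =>
    (ξ / (2 * π)) ^ (k + 1 / 2) * exp (-(ξ * (Q + (t - c) ^ 2 / s)) / 2) * p ξ with hF
  have hFmeas : Measurable (Function.uncurry F) := by
    unfold F Function.uncurry
    fun_prop
  have hF0 : ∀ t ξ, 0 < ξ → 0 ≤ F t ξ := fun t ξ hξ => by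
    have := hp_nonneg ξ
    positivity
  have hinner : ∀ t, ∫ ξ in Set.Ioi (0 : ℝ), F t ξ =
      (∫⁻ ξ in Set.Ioi (0 : ℝ), ENNReal.ofReal (F t ξ)).toReal := fun t =>
    integral_eq_lintegral_of_nonneg_ae
      ((ae_restrict_mem measurableSet_Ioi).mono fun ξ hξ => hF0 t ξ hξ)
      (hFmeas.of_uncurry_left (x := t)).aestronglyMeasurable
  have hfin : ∀ᵐ t : ℝ, ∫⁻ ξ in Set.Ioi (0 : ℝ), ENNReal.ofReal (F t ξ) < ⊤ := by
    filter_upwards [Measure.ae_ne volume c] with t ht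
    have hd : 0 < Q + (t - c) ^ 2 / s := by
      have := sub_ne_zero.mpr ht
      positivity
    exact (integrableOn_rpow_mul_exp_mul hp (by linarith : 0 < k + 1 / 2) hd).lintegral_lt_top
  have hmeas : Measurable (Function.uncurry fun t ξ => ENNReal.ofReal (F t ξ)) :=
    hFmeas.ennreal_ofReal
  rw [integral_congr_ae (ae_of_all _ hinner),
    integral_toReal hmeas.lintegral_prod_right.aemeasurable hfin,
    lintegral_lintegral_swap hmeas.aemeasurable, ← integral_const_mul,
    integral_eq_lintegral_of_nonneg_ae]
  · congr 1
    refine setLIntegral_congr_fun measurableSet_Ioi fun ξ hξ => ?_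
    have hξ : 0 < ξ := hξ
    have hpξ := hp_nonneg ξ
    have hfactor : ∀ t, ENNReal.ofReal (F t ξ) =
        ENNReal.ofReal ((ξ / (2 * π)) ^ (k + 1 / 2) * exp (-(ξ * Q) / 2) * p ξ) *
          ENNReal.ofReal (exp (-(ξ * ((t - c) ^ 2 / s)) / 2)) := fun t => by
      rw [← ENNReal.ofReal_mul (by positivity)]
      congr 1
      have : -(ξ * (Q + (t - c) ^ 2 / s)) / 2 =
          -(ξ * Q) / 2 + -(ξ * ((t - c) ^ 2 / s)) / 2 := by ring
      simp only [hF]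
      rw [this, exp_add]
      ring
    simp_rw [hfactor]
    rw [lintegral_const_mul _ (by fun_prop), lintegral_exp_neg_mul_sub_sq_div hξ hs,
      ← ENNReal.ofReal_mul (by positivity)]
    congr 1
    have hpow : (ξ / (2 * π)) ^ k =
        (ξ / (2 * π)) ^ (k + 1 / 2) * (ξ / (2 * π)) ^ (-(1 / 2) : ℝ) := by
      rw [← rpow_add (by positivity)]
      congr 1
      ring
    rw [hpow]
    ring
  · filter_upwards [ae_restrict_mem measurableSet_Ioi] with ξ hξ
    have hξ : 0 < ξ := hξ
    have := hp_nonneg ξ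
    simp only [Pi.zero_apply]
    positivity
  · exact Measurable.aestronglyMeasurable (by fun_prop)

/-- the consistent elliptical density with scale matrix `S` (of size
`(n+1)×(n+1)`) marginalizes, by integrating out the last coordinate, to the consistent
elliptical density with scale matrix `S'`, the top-left `n×n` block of `S`. -/
theorem elliptical_density_marginal
    (n : ℕ) (p : ℝ → ℝ) (hp_meas : Measurable p) (hp_nonneg : ∀ ξ, 0 ≤ p ξ)
    (hp_zero : ∀ ξ ≤ (0 : ℝ), p ξ = 0)
    (hp_int : ∫ ξ in Set.Ioi (0 : ℝ), p ξ = 1)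
    (S : Matrix (Fin (n + 1)) (Fin (n + 1)) ℝ) (hS : S.PosDef)
    (S' : Matrix (Fin n) (Fin n) ℝ)
    (hS' : ∀ i j : Fin n, S' i j = S i.castSucc j.castSucc)
    (μ : Fin (n + 1) → ℝ) (μ' : Fin n → ℝ) (hμ' : ∀ i : Fin n, μ' i = μ i.castSucc)
    (q : (Fin (n + 1) → ℝ) → ℝ)
    (hq : ∀ y : Fin (n + 1) → ℝ,
      q y = S.det ^ (-(1 : ℝ) / 2) *
        ∫ ξ in Set.Ioi (0 : ℝ),
          (ξ / (2 * π)) ^ (((n : ℝ) + 1) / 2) *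
            Real.exp (-(ξ * ((y - μ) ⬝ᵥ (S⁻¹ *ᵥ (y - μ)))) / 2) * p ξ)
    (q' : (Fin n → ℝ) → ℝ)
    (hq' : ∀ y' : Fin n → ℝ,
      q' y' = S'.det ^ (-(1 : ℝ) / 2) *
        ∫ ξ in Set.Ioi (0 : ℝ),
          (ξ / (2 * π)) ^ ((n : ℝ) / 2) *
            Real.exp (-(ξ * ((y' - μ') ⬝ᵥ (S'⁻¹ *ᵥ (y' - μ')))) / 2) * p ξ) :
    ∀ y' : Fin n → ℝ, (∫ t : ℝ, q (Fin.snoc y' t)) = q' y' := by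
  have hS'_eq : S' = S.submatrix Fin.castSucc Fin.castSucc := by
    ext i j
    exact hS' i j
  have hA : (S.submatrix Fin.castSucc Fin.castSucc).PosDef :=
    hS.submatrix (Fin.castSucc_injective n)
  have hAunit : IsUnit (S.submatrix Fin.castSucc Fin.castSucc).det := hA.det_pos.ne'.isUnit
  have hdet := det_eq_det_castSucc_mul_schur S hAunit
  have hrow : (fun j : Fin n => S (Fin.last n) j.castSucc) =
      fun i : Fin n => S i.castSucc (Fin.last n) := by
    ext i
    simpa using hS.isHermitian.apply i.castSucc (Fin.last n)
  rw [hrow, ← hS'_eq] at hdet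
  rw [← hS'_eq] at hA hAunit
  set b : Fin n → ℝ := fun i => S i.castSucc (Fin.last n) with hb
  set s := S (Fin.last n) (Fin.last n) - b ⬝ᵥ (S'⁻¹ *ᵥ b) with hs
  have hs0 : 0 < s := by
    have := hS.det_pos
    rw [hdet] at this
    exact (mul_pos_iff_of_pos_left hA.det_pos).mp this
  have hp : IntegrableOn p (Set.Ioi 0) := by
    by_contra h
    rw [integral_undef h] at hp_int
    exact zero_ne_one hp_int
  intro y'
  have hsub : ∀ t, (Fin.snoc y' t : Fin (n + 1) → ℝ) - μ =
      Fin.snoc (y' - μ') (t - μ (Fin.last n)) := fun t => by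
    ext i
    refine Fin.lastCases ?_ (fun j => ?_) i <;> simp [hμ']
  have hquad : ∀ t, ((Fin.snoc y' t : Fin (n + 1) → ℝ) - μ) ⬝ᵥ
      (S⁻¹ *ᵥ ((Fin.snoc y' t : Fin (n + 1) → ℝ) - μ)) =
      (y' - μ') ⬝ᵥ (S'⁻¹ *ᵥ (y' - μ')) +
        (t - (μ (Fin.last n) + b ⬝ᵥ (S'⁻¹ *ᵥ (y' - μ')))) ^ 2 / s := fun t => by
    rw [hsub, dotProduct_inv_mulVec_snoc hS.isHermitian hS.det_pos.ne'.isUnit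
      (hS'_eq ▸ hAunit) (fun i => rfl) (hS'_eq ▸ hs) hs0.ne', ← hS'_eq, sub_sub]
  have hQ : 0 ≤ (y' - μ') ⬝ᵥ (S'⁻¹ *ᵥ (y' - μ')) := by
    simpa using hA.inv.posSemidef.dotProduct_mulVec_nonneg (y' - μ')
  have hk : ((n : ℝ) + 1) / 2 = (n : ℝ) / 2 + 1 / 2 := by ring
  simp_rw [hq, hquad, hk]
  rw [integral_const_mul, integral_gaussian_mixture hp_meas hp_nonneg hp (by positivity) hQ hs0,
    hq', ← mul_assoc, hdet, mul_rpow hA.det_pos.le hs0.le, mul_assoc (S'.det ^ _), sqrt_eq_rpow,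
    ← rpow_add hs0]
  norm_num
end

section
/- (Kano's characterization, converse direction.) Suppose for each n ≥ 1 we are given a measurable function f_n : [0,∞) → [0,∞) such that ∫_{ℝ^n} f_n(‖y‖²) dy = 1 and such that for all n ≥ 1 and all u ≥ 0, ∫_ℝ f_{n+1}(u + t²) dt = f_n(u). Then there exists a probability measure ν on ℝ with ν((-∞,0]) = 0 such that for every n ≥ 1 and Lebesgue-almost every u ≥ 0, f_n(u) = ∫ (ξ/(2π))^{n/2} e^{-uξ/2} dν(ξ). -/
open MeasureTheory Real Set
open scoped ENNReal

/-- Integral of `A (u + t²)` over `t : ℝ`: it sends a spherical density generator to the generator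
of the marginal with one coordinate integrated out. -/
noncomputable def lineMarginal (A : ℝ → ℝ≥0∞) (u : ℝ) : ℝ≥0∞ := ∫⁻ t : ℝ, A (u + t ^ 2)

theorem measurable_lineMarginal {A : ℝ → ℝ≥0∞} (hA : Measurable A) :
    Measurable (lineMarginal A) := by
  unfold lineMarginal
  exact Measurable.lintegral_prod_right' (f := fun p : ℝ × ℝ => A (p.1 + p.2 ^ 2)) (by fun_prop)

theorem ae_add_sq_iff {P : ℝ → Prop} (u : ℝ) :
    (∀ᵐ t : ℝ, P (u + t ^ 2)) ↔ ∀ᵐ r ∂(volume.restrict (Ioi u)), P r := by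
  rw [ae_restrict_iff' measurableSet_Ioi]
  constructor
  · intro h
    have h0 : volume {t : ℝ | ¬ P (u + t ^ 2)} = 0 := h
    have h1 := addHaar_image_eq_zero_of_differentiableOn_of_addHaar_eq_zero volume
      (f := fun t : ℝ => u + t ^ 2) (s := {t : ℝ | ¬ P (u + t ^ 2)}) (by fun_prop) h0
    refine measure_mono_null (fun r hr => ?_) h1
    simp only [mem_compl_iff, mem_ofPred_eq, Classical.not_imp, mem_Ioi] at hr
    have hs : u + √(r - u) ^ 2 = r := by rw [sq_sqrt (by linarith [hr.1])]; ring
    exact ⟨√(r - u), by simp only [mem_ofPred_eq, hs]; exact hr.2, hs⟩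
  · intro h
    set N : Set ℝ := {r | ¬ (r ∈ Ioi u → P r)}
    have h0 : volume N = 0 := h
    have hd : DifferentiableOn ℝ (fun r : ℝ => √(r - u)) N := by
      intro r hr
      have hr : u < r := by
        by_contra hc
        exact hr fun hr' => absurd hr' hc
      exact ((differentiableAt_id.sub_const u).sqrt (by simp; linarith)).differentiableWithinAt
    have h1 := addHaar_image_eq_zero_of_differentiableOn_of_addHaar_eq_zero volume hd h0
    have h2 := addHaar_image_eq_zero_of_differentiableOn_of_addHaar_eq_zero volume hd.neg h0
    have h3 : volume ({0} : Set ℝ) = 0 := by simp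
    refine measure_mono_null (fun t ht => ?_) (measure_union_null h3 (measure_union_null h1 h2))
    rcases eq_or_ne t 0 with rfl | h0
    · exact Or.inl rfl
    have hmem : u + t ^ 2 ∈ N := fun hc => ht (hc (by simp; positivity))
    rcases lt_or_gt_of_ne h0 with hlt | hgt
    · exact Or.inr (Or.inr ⟨_, hmem, by simp [sqrt_sq_eq_abs, abs_of_neg hlt]⟩)
    · exact Or.inr (Or.inl ⟨_, hmem, by simp [sqrt_sq_eq_abs, abs_of_pos hgt]⟩)

theorem lineMarginal_congr {A B : ℝ → ℝ≥0∞} {u : ℝ}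
    (h : ∀ᵐ r ∂(volume.restrict (Ioi u)), A r = B r) : lineMarginal A u = lineMarginal B u :=
  lintegral_congr_ae ((ae_add_sq_iff u).2 h)

theorem lintegral_Ioi_two_mul_comp_add_sq (A : ℝ → ℝ≥0∞) (u : ℝ) :
    ∫⁻ r in Ioi 0, ENNReal.ofReal (2 * r) * A (u + r ^ 2) = ∫⁻ r in Ioi u, A r := by
  have himg : (fun r : ℝ => u + r ^ 2) '' Ioi 0 = Ioi u := by
    ext r
    constructor
    · rintro ⟨t, ht, rfl⟩
      have : 0 < t := ht
      simp only [mem_Ioi]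
      nlinarith
    · intro hr
      have hr : u < r := hr
      exact ⟨√(r - u), sqrt_pos.2 (by linarith), by
        simp only; rw [sq_sqrt (by linarith)]; ring⟩
  rw [← himg, lintegral_image_eq_lintegral_abs_deriv_mul measurableSet_Ioi
    (f' := fun r => 2 * r)]
  · refine setLIntegral_congr_fun measurableSet_Ioi fun r hr => ?_
    have : 0 < r := hr
    rw [abs_of_pos (by positivity)]
  · intro r _
    simpa using (((hasDerivAt_id r).pow 2).const_add u).hasDerivWithinAt
  · intro a ha b hb hab
    have ha : 0 < a := ha
    have hb : 0 < b := hb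
    simp only at hab
    nlinarith

theorem lineMarginal_lineMarginal {A : ℝ → ℝ≥0∞} (hA : Measurable A) (u : ℝ) :
    lineMarginal (lineMarginal A) u = ENNReal.ofReal π * ∫⁻ r in Ioi u, A r := by
  have h1 : lineMarginal (lineMarginal A) u =
      ∫⁻ p : ℝ × ℝ, A (u + p.1 ^ 2 + p.2 ^ 2) := by
    rw [Measure.volume_eq_prod, lintegral_prod _ (by fun_prop)]
    rfl
  rw [h1, ← lintegral_comp_polarCoord_symm, polarCoord_target, Measure.volume_eq_prod,
    ← Measure.prod_restrict]
  have h2 : ∀ p : ℝ × ℝ, ENNReal.ofReal p.1 • A (u + (polarCoord.symm p).1 ^ 2 +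
      (polarCoord.symm p).2 ^ 2) = ENNReal.ofReal p.1 * A (u + p.1 ^ 2) * 1 := by
    intro p
    rw [polarCoord_symm_apply, smul_eq_mul, mul_one]
    congr 2
    simp only
    nlinarith [sin_sq_add_cos_sq p.2]
  simp_rw [h2]
  rw [lintegral_prod_mul (f := fun r => ENNReal.ofReal r * A (u + r ^ 2)) (g := fun _ => 1)
    (by fun_prop) (by fun_prop), ← lintegral_Ioi_two_mul_comp_add_sq A u]
  simp only [lintegral_one, Measure.restrict_apply_univ, volume_Ioo]
  rw [mul_comm, ← lintegral_const_mul _ (by fun_prop), ← lintegral_const_mul _ (by fun_prop)]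
  refine lintegral_congr fun r => ?_
  rw [← mul_assoc, ← mul_assoc, ← ENNReal.ofReal_mul (by linarith [pi_pos]),
    ← ENNReal.ofReal_mul pi_pos.le]
  congr 2
  ring

theorem lintegral_pi_sum_sq {A : ℝ → ℝ≥0∞} (hA : Measurable A) (n : ℕ) (u : ℝ) :
    ∫⁻ y : Fin n → ℝ, A (u + ∑ i, y i ^ 2) = lineMarginal^[n] A u := by
  induction n generalizing u with
  | zero => simp [volume_pi]
  | succ n ih =>
    rw [Function.iterate_succ_apply',
      ← (volume_preserving_piFinSuccAbove (fun _ : Fin (n + 1) => ℝ) 0).symm.lintegral_comp_emb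
        (MeasurableEquiv.measurableEmbedding _), Measure.volume_eq_prod,
      lintegral_prod _ (by fun_prop)]
    refine lintegral_congr fun t => ?_
    rw [← ih]
    refine lintegral_congr fun y => ?_
    simp [Fin.sum_univ_succ, MeasurableEquiv.piFinSuccAbove, add_assoc]

theorem measurable_iterate_lineMarginal {A : ℝ → ℝ≥0∞} (hA : Measurable A) (n : ℕ) :
    Measurable (lineMarginal^[n] A) := by
  induction n with
  | zero => exact hA
  | succ n ih => rw [Function.iterate_succ_apply']; exact measurable_lineMarginal ih

theorem ae_lt_top_of_lineMarginal_ne_top {A : ℝ → ℝ≥0∞} (hA : Measurable A) {u : ℝ}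
    (h : lineMarginal A u ≠ ∞) : ∀ᵐ r ∂(volume.restrict (Ioi u)), A r < ∞ :=
  (ae_add_sq_iff u).1 (ae_lt_top (by fun_prop) h)

/-- A property that holds almost everywhere to the right of `u` holds arbitrarily close to `u`. -/
theorem exists_mem_Ioo_of_ae_Ioi {P : ℝ → Prop} {u v : ℝ} (huv : u < v)
    (h : ∀ᵐ r ∂(volume.restrict (Ioi u)), P r) : ∃ r ∈ Ioo u v, P r := by
  rw [ae_restrict_iff' measurableSet_Ioi] at h
  by_contra! hc
  have h0 : volume {r | ¬ (r ∈ Ioi u → P r)} = 0 := h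
  have : volume (Ioo u v) = 0 := by
    refine measure_mono_null (fun r hr => ?_) h0
    exact fun hP => hc r hr (hP hr.1)
  simp at this
  linarith

theorem ae_Ioi_of_forall_gt {P : ℝ → Prop} {u : ℝ}
    (h : ∀ v > u, ∀ᵐ r ∂(volume.restrict (Ioi v)), P r) :
    ∀ᵐ r ∂(volume.restrict (Ioi u)), P r := by
  have hU : Ioi u = ⋃ n : ℕ, Ioi (u + 1 / ((n : ℝ) + 1)) := by
    ext r
    simp only [mem_Ioi, mem_iUnion]
    constructor
    · intro hr
      obtain ⟨n, hn⟩ := exists_nat_one_div_lt (sub_pos.2 hr)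
      exact ⟨n, by linarith⟩
    · rintro ⟨n, hn⟩
      have : (0 : ℝ) < 1 / ((n : ℝ) + 1) := by positivity
      linarith
  rw [hU, ae_restrict_iUnion_iff]
  exact fun n => h _ (by simp; positivity)

theorem ae_lt_top_of_iterate_lineMarginal_ne_top {A : ℝ → ℝ≥0∞} (hA : Measurable A) {n : ℕ}
    (hn : n ≠ 0) {u : ℝ} (h : lineMarginal^[n] A u ≠ ∞) :
    ∀ᵐ r ∂(volume.restrict (Ioi u)), A r < ∞ := by
  induction n generalizing u with
  | zero => exact absurd rfl hn
  | succ n ih =>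
    rw [Function.iterate_succ_apply'] at h
    have h1 := ae_lt_top_of_lineMarginal_ne_top (measurable_iterate_lineMarginal hA n) h
    rcases eq_or_ne n 0 with rfl | hn0
    · exact h1
    refine ae_Ioi_of_forall_gt fun v hv => ?_
    obtain ⟨r, hr, hfin⟩ := exists_mem_Ioo_of_ae_Ioi hv h1
    exact ae_restrict_of_ae_restrict_of_subset (Ioi_subset_Ioi hr.2.le) (ih hn0 hfin.ne)

theorem lintegral_Ioi_mul_lintegral_Ioi {w B : ℝ → ℝ≥0∞} (hw : Measurable w) (hB : Measurable B)
    (u : ℝ) : ∫⁻ r in Ioi u, w r * ∫⁻ s in Ioi r, B s =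
      ∫⁻ s in Ioi u, (∫⁻ r in Ioo u s, w r) * B s := by
  set S : Set (ℝ × ℝ) := {p | u < p.1 ∧ p.1 < p.2} with hS
  have hSm : MeasurableSet S :=
    (measurableSet_lt measurable_const measurable_fst).inter
      (measurableSet_lt measurable_fst measurable_snd)
  have hm : Measurable (S.indicator fun p => w p.1 * B p.2) :=
    Measurable.indicator (by fun_prop) hSm
  have h1 : ∫⁻ r in Ioi u, w r * ∫⁻ s in Ioi r, B s =
      ∫⁻ r, ∫⁻ s, S.indicator (fun p => w p.1 * B p.2) (r, s) := by
    rw [← lintegral_indicator measurableSet_Ioi]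
    refine lintegral_congr fun r => ?_
    by_cases hr : u < r
    · rw [indicator_of_mem (mem_Ioi.2 hr), ← lintegral_const_mul _ hB,
        ← lintegral_indicator measurableSet_Ioi]
      refine lintegral_congr fun s => ?_
      simp [indicator, hS, hr]
    · simp [indicator, hS, hr]
  have h2 : ∫⁻ s in Ioi u, (∫⁻ r in Ioo u s, w r) * B s =
      ∫⁻ s, ∫⁻ r, S.indicator (fun p => w p.1 * B p.2) (r, s) := by
    rw [← lintegral_indicator measurableSet_Ioi]
    refine lintegral_congr fun s => ?_
    by_cases hs : u < s
    · rw [indicator_of_mem (mem_Ioi.2 hs), ← lintegral_mul_const _ hw,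
        ← lintegral_indicator measurableSet_Ioo]
      refine lintegral_congr fun r => ?_
      simp [indicator, hS]
    · have : ∀ r, ¬ (u < r ∧ r < s) := fun r hr => hs (hr.1.trans hr.2)
      simp [indicator, hS, hs, this]
  rw [h1, h2]
  exact lintegral_lintegral_swap hm.aemeasurable

theorem lintegral_Ioo_ofReal_sub_pow (N : ℕ) {u s : ℝ} (h : u ≤ s) :
    ∫⁻ r in Ioo u s, ENNReal.ofReal ((r - u) ^ N) =
      ENNReal.ofReal ((s - u) ^ (N + 1) / (N + 1)) := by
  rw [← ofReal_integral_eq_lintegral_ofReal]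
  · rw [← integral_Ioc_eq_integral_Ioo, ← intervalIntegral.integral_of_le h,
      intervalIntegral.integral_comp_sub_right (fun x => x ^ N), integral_pow]
    simp
  · exact (Continuous.integrableOn_Icc (by fun_prop)).mono_set Ioo_subset_Icc_self
  · filter_upwards [ae_restrict_mem measurableSet_Ioo] with r hr
    exact pow_nonneg (sub_nonneg.2 hr.1.le) N

theorem consistent_eq_lintegral_Ioi {g : ℕ → ℝ → ℝ≥0∞}
    (hg : ∀ k, Measurable (g k))
    (hT : ∀ k, ∀ u ≥ (0 : ℝ), lineMarginal (g (k + 1)) u = g k u)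
    (k : ℕ) {u : ℝ} (hu : 0 ≤ u) :
    g k u = ENNReal.ofReal π * ∫⁻ r in Ioi u, g (k + 2) r := by
  rw [← lineMarginal_lineMarginal (hg _), ← hT k u hu]
  refine lineMarginal_congr ?_
  filter_upwards [ae_restrict_mem measurableSet_Ioi] with r hr
  exact (hT (k + 1) r (hu.trans (le_of_lt hr))).symm

theorem consistent_zero_eq_lintegral_pow {g : ℕ → ℝ → ℝ≥0∞}
    (hg : ∀ k, Measurable (g k))
    (hT : ∀ k, ∀ u ≥ (0 : ℝ), lineMarginal (g (k + 1)) u = g k u)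
    (N : ℕ) {u : ℝ} (hu : 0 ≤ u) :
    g 0 u = ∫⁻ r in Ioi u, ENNReal.ofReal ((r - u) ^ N) *
      (ENNReal.ofReal (π ^ (N + 1) / N.factorial) * g (2 * N + 2) r) := by
  induction N with
  | zero =>
    rw [consistent_eq_lintegral_Ioi hg hT 0 hu, ← lintegral_const_mul _ (hg _)]
    simp
  | succ N ih =>
    have hpi := pi_pos
    rw [ih]
    have h1 : ∀ r ∈ Ioi u, ENNReal.ofReal ((r - u) ^ N) *
        (ENNReal.ofReal (π ^ (N + 1) / N.factorial) * g (2 * N + 2) r) =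
        ENNReal.ofReal ((r - u) ^ N) * ∫⁻ s in Ioi r,
          (ENNReal.ofReal (π ^ (N + 2) / N.factorial) * g (2 * (N + 1) + 2) s) := by
      intro r hr
      have hr : u < r := hr
      rw [consistent_eq_lintegral_Ioi hg hT (2 * N + 2) (hu.trans hr.le),
        lintegral_const_mul _ (hg _), ← mul_assoc (ENNReal.ofReal (π ^ (N + 1) / N.factorial)),
        ← ENNReal.ofReal_mul (by positivity)]
      congr 3
      ring
    have hm : Measurable (g (2 * (N + 1) + 2)) := hg _
    rw [setLIntegral_congr_fun measurableSet_Ioi h1,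
      lintegral_Ioi_mul_lintegral_Ioi (by fun_prop) (by fun_prop)]
    refine setLIntegral_congr_fun measurableSet_Ioi fun s hs => ?_
    have hs : u < s := hs
    have hsu : 0 < s - u := sub_pos.2 hs
    rw [lintegral_Ioo_ofReal_sub_pow N hs.le, ← mul_assoc, ← mul_assoc,
      ← ENNReal.ofReal_mul (by positivity), ← ENNReal.ofReal_mul (by positivity)]
    congr 2
    rw [Nat.factorial_succ]
    push_cast
    field_simp

theorem abs_max_one_sub_div_pow_sub_exp_neg_le {N : ℕ} (hN : 2 ≤ N) {s : ℝ} (hs : 0 ≤ s) :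
    |max (1 - s / N) 0 ^ N - exp (-s)| ≤ 8 / N := by
  have hN' : (2 : ℝ) ≤ N := by exact_mod_cast hN
  have hN0 : (0 : ℝ) < N := by linarith
  set x : ℝ := s / N with hx
  have hx0 : 0 ≤ x := by positivity
  have hsx : s = N * x := by rw [hx]; field_simp
  set a : ℝ := max (1 - x) 0 with ha
  set b : ℝ := exp (-x) with hb
  have ha0 : 0 ≤ a := le_max_right _ _
  have hab : a ≤ b := max_le (by have := add_one_le_exp (-x); linarith) (exp_pos _).le
  have hexp : exp (-s) = b ^ N := by rw [hb, ← exp_nat_mul, hsx]; ring_nf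
  have hba : b - a ≤ x ^ 2 := by
    rcases le_total x 1 with h | h
    · have h1 : |exp (-x) - 1 - (-x)| ≤ (-x) ^ 2 :=
        Real.abs_exp_sub_one_sub_id_le (by rw [abs_neg, abs_of_nonneg hx0]; exact h)
      have h2 : 1 - x ≤ a := le_max_left _ _
      have h3 := (abs_le.1 h1).2
      nlinarith
    · have : b ≤ 1 := by rw [hb]; exact exp_le_one_iff.2 (by linarith)
      nlinarith
  have hb0 : 0 < b := exp_pos _
  have hpow : b ^ N - a ^ N ≤ N * b ^ (N - 1) * (b - a) := by
    have h := abs_pow_sub_pow_le b a N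
    rw [abs_of_nonneg (sub_nonneg.2 hab), abs_of_pos hb0, abs_of_nonneg ha0,
      max_eq_left hab] at h
    linarith [le_abs_self (b ^ N - a ^ N)]
  have hb2 : b ^ (N - 1) ≤ exp (-(s / 2)) := by
    rw [hb, ← exp_nat_mul, exp_le_exp, hsx, Nat.cast_sub (by omega)]
    push_cast
    nlinarith
  have hquad : exp (-(s / 2)) * s ^ 2 ≤ 8 := by
    have h1 := Real.quadratic_le_exp_of_nonneg (x := s / 2) (by positivity)
    rw [exp_neg]
    rw [inv_mul_le_iff₀ (exp_pos _)]
    nlinarith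
  rw [hexp, abs_sub_comm, abs_of_nonneg (sub_nonneg.2 (pow_le_pow_left₀ ha0 hab N)),
    le_div_iff₀ hN0]
  calc (b ^ N - a ^ N) * N ≤ (N * b ^ (N - 1) * (b - a)) * N := by gcongr
    _ ≤ (N * exp (-(s / 2)) * x ^ 2) * N := by gcongr
    _ = exp (-(s / 2)) * s ^ 2 := by rw [hsx]; ring
    _ ≤ 8 := hquad


theorem exists_probabilityMeasure_abs_sub_integral_rpow_le {N : ℕ} (hN : 2 ≤ N)
    {w : ℝ → ℝ≥0∞} (hw : Measurable w) {G : ℝ → ℝ≥0∞} (hG0 : G 0 = 1)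
    (hG : ∀ u ≥ (0 : ℝ), G u = ∫⁻ r in Ioi u, ENNReal.ofReal ((r - u) ^ N) * w r) :
    ∃ ρ : ProbabilityMeasure unitInterval, ∀ u ≥ (0 : ℝ),
      |(G u).toReal - ∫ x, (x : ℝ) ^ u ∂(ρ : Measure unitInterval)| ≤ 8 / N := by
  have hN0 : (0 : ℝ) < N := by exact_mod_cast (by omega : 0 < N)
  set d : ℝ → ℝ≥0∞ := fun r => ENNReal.ofReal (r ^ N) * w r with hd
  have hdm : Measurable d := by fun_prop
  set μ : Measure ℝ := (volume.restrict (Ioi 0)).withDensity d with hμ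
  have hμp : IsProbabilityMeasure μ := by
    constructor
    rw [hμ, withDensity_apply _ MeasurableSet.univ, Measure.restrict_univ, ← hG0, hG 0 le_rfl]
    simp [hd]
  have hμpos : ∀ᵐ r ∂μ, 0 < r :=
    (withDensity_absolutelyContinuous _ _).ae_le (ae_restrict_mem measurableSet_Ioi)
  have hGμ : ∀ u ≥ (0 : ℝ), G u = ∫⁻ r, ENNReal.ofReal (max (1 - u / r) 0 ^ N) ∂μ := by
    intro u hu
    rw [hG u hu, hμ, lintegral_withDensity_eq_lintegral_mul _ hdm (by fun_prop),
      ← lintegral_indicator measurableSet_Ioi, ← lintegral_indicator measurableSet_Ioi]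
    refine lintegral_congr fun r => ?_
    by_cases hr : 0 < r
    · rw [indicator_of_mem (mem_Ioi.2 hr)]
      simp only [Pi.mul_apply, hd]
      by_cases hur : u < r
      · rw [indicator_of_mem (mem_Ioi.2 hur), mul_right_comm,
          ← ENNReal.ofReal_mul (by positivity), ← mul_pow, max_eq_left]
        · congr 3
          field_simp
        · rw [sub_nonneg, div_le_one hr]; exact hur.le
      · rw [indicator_of_notMem (by simpa using hur), max_eq_right]
        · rw [zero_pow (by omega)]; simp
        · rw [sub_nonpos, one_le_div hr]; linarith
    · rw [indicator_of_notMem (by simp; linarith), indicator_of_notMem (by simpa using hr)]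
  set φ : ℝ → unitInterval := fun r => projIcc 0 1 zero_le_one (exp (-(N / r))) with hφ
  have hφm : Measurable φ := continuous_projIcc.measurable.comp (by fun_prop)
  have hφv : ∀ r > 0, (φ r : ℝ) = exp (-(N / r)) := by
    intro r hr
    have : exp (-(N / r)) ∈ Icc (0 : ℝ) 1 :=
      ⟨(exp_pos _).le, exp_le_one_iff.2 (neg_nonpos.2 (by positivity))⟩
    simp only [hφ]
    rw [projIcc_of_mem _ this]
  refine ⟨⟨μ.map φ, Measure.isProbabilityMeasure_map hφm.aemeasurable⟩, fun u hu => ?_⟩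
  have hmax : ∀ᵐ r ∂μ, ‖max (1 - u / r) 0 ^ N‖ ≤ (1 : ℝ) := by
    filter_upwards [hμpos] with r hr
    have h0 : 0 ≤ max (1 - u / r) 0 := le_max_right _ _
    rw [Real.norm_of_nonneg (by positivity)]
    exact pow_le_one₀ h0 (max_le (by have : 0 ≤ u / r := by positivity
                                     linarith) zero_le_one)
  have hexp : ∀ᵐ r ∂μ, ‖exp (-(u * N / r))‖ ≤ (1 : ℝ) := by
    filter_upwards [hμpos] with r hr
    rw [Real.norm_of_nonneg (exp_pos _).le]
    exact exp_le_one_iff.2 (neg_nonpos.2 (by positivity))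
  have hi1 : Integrable (fun r : ℝ => max (1 - u / r) 0 ^ N) μ :=
    Integrable.of_bound (Measurable.aestronglyMeasurable (by fun_prop)) 1 hmax
  have hi2 : Integrable (fun r : ℝ => exp (-(u * N / r))) μ :=
    Integrable.of_bound (Measurable.aestronglyMeasurable (by fun_prop)) 1 hexp
  have h1 : (G u).toReal = ∫ r, max (1 - u / r) 0 ^ N ∂μ := by
    rw [integral_eq_lintegral_of_nonneg_ae _ hi1.1, hGμ u hu]
    exact Filter.Eventually.of_forall fun r => pow_nonneg (le_max_right _ _) N
  have h2 : ∫ x, (x : ℝ) ^ u ∂(μ.map φ) = ∫ r, exp (-(u * N / r)) ∂μ := by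
    rw [integral_map hφm.aemeasurable (Measurable.aestronglyMeasurable (by fun_prop))]
    refine integral_congr_ae ?_
    filter_upwards [hμpos] with r hr
    rw [hφv r hr, ← exp_mul]
    congr 1
    ring
  rw [ProbabilityMeasure.coe_mk, h1, h2, ← integral_sub hi1 hi2, ← Real.norm_eq_abs]
  have h3 := norm_integral_le_of_norm_le_const (μ := μ) (C := 8 / N)
    (f := fun r => max (1 - u / r) 0 ^ N - exp (-(u * N / r))) ?_
  · simpa using h3
  filter_upwards [hμpos] with r hr
  have h4 := abs_max_one_sub_div_pow_sub_exp_neg_le hN (s := u * N / r) (by positivity)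
  have h5 : u * N / r / N = u / r := by field_simp
  rwa [h5] at h4

open Filter Topology in
theorem exists_probabilityMeasure_toReal_eq_integral_rpow
    {G : ℝ → ℝ≥0∞} (hG0 : G 0 = 1) {w : ℕ → ℝ → ℝ≥0∞} (hw : ∀ N, Measurable (w N))
    (hG : ∀ N, ∀ u ≥ (0 : ℝ), G u = ∫⁻ r in Ioi u, ENNReal.ofReal ((r - u) ^ N) * w N r) :
    ∃ ρ : ProbabilityMeasure unitInterval, ∀ u > (0 : ℝ),
      (G u).toReal = ∫ x, (x : ℝ) ^ u ∂(ρ : Measure unitInterval) := by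
  have h : ∀ N : ℕ, ∃ ρ : ProbabilityMeasure unitInterval, 2 ≤ N → ∀ u ≥ (0 : ℝ),
      |(G u).toReal - ∫ x, (x : ℝ) ^ u ∂(ρ : Measure unitInterval)| ≤ 8 / N := by
    intro N
    by_cases hN : 2 ≤ N
    · obtain ⟨ρ, hρ⟩ :=
        exists_probabilityMeasure_abs_sub_integral_rpow_le hN (hw N) hG0 (hG N)
      exact ⟨ρ, fun _ => hρ⟩
    · exact ⟨⟨Measure.dirac 0, inferInstance⟩, fun h => absurd h hN⟩
  choose ρ hρ using h
  obtain ⟨σ, -, hσ⟩ := isCompact_univ.ultrafilter_le_nhds ((hyperfilter ℕ).map ρ) (by simp)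
  have hU : (hyperfilter ℕ : Filter ℕ) ≤ atTop := Nat.hyperfilter_le_atTop
  have hσ' : Tendsto ρ (hyperfilter ℕ) (𝓝 σ) := hσ
  refine ⟨σ, fun u hu => ?_⟩
  let F : BoundedContinuousFunction unitInterval ℝ := BoundedContinuousFunction.mkOfCompact
    ⟨fun x => (x : ℝ) ^ u, continuous_subtype_val.rpow_const fun _ => Or.inr hu.le⟩
  have h1 := ProbabilityMeasure.tendsto_iff_forall_integral_tendsto.1 hσ' F
  have h2 : Tendsto (fun N => ∫ x, F x ∂(ρ N : Measure unitInterval)) (hyperfilter ℕ)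
      (𝓝 (G u).toReal) := by
    rw [tendsto_iff_dist_tendsto_zero]
    refine squeeze_zero' (Eventually.of_forall fun _ => dist_nonneg) ?_
      ((tendsto_const_div_atTop_nhds_zero_nat 8).mono_left hU)
    filter_upwards [hU (eventually_ge_atTop 2)] with N hN
    rw [dist_comm]
    exact hρ N hN u hu.le
  exact tendsto_nhds_unique h2 h1

open Filter Topology in
theorem tendsto_lintegral_Ioi_one_div_nat {v : ℝ → ℝ≥0∞} :
    Tendsto (fun n : ℕ => ∫⁻ r in Ioi (1 / ((n : ℝ) + 1)), v r) atTop
      (𝓝 (∫⁻ r in Ioi 0, v r)) := by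
  have hU : ⋃ n : ℕ, Ioi (1 / ((n : ℝ) + 1)) = Ioi 0 := by
    ext r
    simp only [mem_Ioi, mem_iUnion]
    constructor
    · rintro ⟨n, hn⟩
      exact lt_trans (by positivity) hn
    · exact fun hr => exists_nat_one_div_lt hr
  have h := tendsto_measure_iUnion_atTop (μ := volume.withDensity v)
    (s := fun n : ℕ => Ioi (1 / ((n : ℝ) + 1)))
    (fun m n hmn => Ioi_subset_Ioi (one_div_le_one_div_of_le (by positivity) (by gcongr)))
  rw [hU] at h
  simpa only [Function.comp_def, withDensity_apply _ measurableSet_Ioi] using h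

open Filter Topology in
theorem tendsto_lintegral_Ioi_nat {v : ℝ → ℝ≥0∞} (hv : ∫⁻ r in Ioi 0, v r ≠ ∞) :
    Tendsto (fun n : ℕ => ∫⁻ r in Ioi (n : ℝ), v r) atTop (𝓝 0) := by
  have hI : ⋂ n : ℕ, Ioi (n : ℝ) = ∅ := by
    refine eq_empty_of_forall_notMem fun r hr => ?_
    obtain ⟨n, hn⟩ := exists_nat_gt r
    exact lt_asymm hn (mem_iInter.1 hr n)
  have h := tendsto_measure_iInter_atTop (μ := volume.withDensity v)
    (s := fun n : ℕ => Ioi (n : ℝ)) (fun n => measurableSet_Ioi.nullMeasurableSet)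
    (fun m n hmn => Ioi_subset_Ioi (by gcongr))
    ⟨0, by rw [withDensity_apply _ measurableSet_Ioi]; simpa using hv⟩
  rw [hI, measure_empty] at h
  simpa only [Function.comp_def, withDensity_apply _ measurableSet_Ioi] using h

open Filter Topology in
theorem exists_measure_eq_lintegral_exp {G v : ℝ → ℝ≥0∞} (hG0 : G 0 = 1)
    (hG : ∀ u ≥ (0 : ℝ), G u = ∫⁻ r in Ioi u, v r) {ρ : Measure unitInterval}
    [IsProbabilityMeasure ρ] (hρ : ∀ u > (0 : ℝ), (G u).toReal = ∫ x, (x : ℝ) ^ u ∂ρ) :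
    ∃ ν : Measure ℝ, IsProbabilityMeasure ν ∧ ν (Iic 0) = 0 ∧
      ∀ u ≥ (0 : ℝ), G u = ∫⁻ ξ, ENNReal.ofReal (exp (-u * ξ / 2)) ∂ν := by
  have hv1 : ∫⁻ r in Ioi 0, v r = 1 := by rw [← hG 0 le_rfl, hG0]
  have hint : ∀ u > (0 : ℝ), Integrable (fun x : unitInterval => (x : ℝ) ^ u) ρ := fun u hu =>
    Integrable.of_bound (Measurable.aestronglyMeasurable (by fun_prop)) 1 (.of_forall fun x => by
      rw [Real.norm_of_nonneg (rpow_nonneg x.2.1 u)]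
      exact rpow_le_one x.2.1 x.2.2 hu.le)
  have hzero : ρ {0} = 0 := by
    rw [← measureReal_eq_zero_iff]
    have hle : ∀ u > (0 : ℝ), (G u).toReal ≤ 1 - ρ.real {0} := by
      intro u hu
      rw [hρ u hu, ← probReal_compl_eq_one_sub (measurableSet_singleton _),
        ← integral_indicator_one (measurableSet_singleton _).compl]
      refine integral_mono (hint u hu)
        ((integrable_const 1).indicator (measurableSet_singleton _).compl) fun x => ?_
      by_cases hx : x = 0
      · simp [hx, zero_rpow hu.ne']
      · simpa [hx] using rpow_le_one x.2.1 x.2.2 hu.le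
    have hlim : Tendsto (fun n : ℕ => (G (1 / ((n : ℝ) + 1))).toReal) atTop (𝓝 1) := by
      have h := (ENNReal.tendsto_toReal (by simp [hv1])).comp
        (tendsto_lintegral_Ioi_one_div_nat (v := v))
      rw [hv1] at h
      refine h.congr fun n => ?_
      rw [hG _ (by positivity)]
      rfl
    have := le_of_tendsto' hlim fun n : ℕ => hle _ (by positivity)
    exact le_antisymm (by linarith) measureReal_nonneg
  have hone : ρ {1} = 0 := by
    rw [← measureReal_eq_zero_iff]
    have hle : ∀ u > (0 : ℝ), ρ.real {1} ≤ (G u).toReal := by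
      intro u hu
      rw [hρ u hu, ← integral_indicator_one (measurableSet_singleton _)]
      refine integral_mono ((integrable_const 1).indicator (measurableSet_singleton _))
        (hint u hu) fun x => ?_
      by_cases hx : x = 1
      · simp [hx]
      · simpa [hx] using rpow_nonneg x.2.1 u
    have hlim : Tendsto (fun n : ℕ => (G n).toReal) atTop (𝓝 0) := by
      have h := (ENNReal.tendsto_toReal (by simp)).comp
        (tendsto_lintegral_Ioi_nat (v := v) (by simp [hv1]))
      refine h.congr fun n => ?_
      rw [hG _ (by positivity)]
      rfl
    refine le_antisymm (ge_of_tendsto hlim ?_) measureReal_nonneg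
    filter_upwards [eventually_gt_atTop 0] with n hn
    exact hle n (by exact_mod_cast hn)
  have hψ : Measurable fun x : unitInterval => -2 * log x := by fun_prop
  refine ⟨ρ.map fun x : unitInterval => -2 * log x,
    Measure.isProbabilityMeasure_map hψ.aemeasurable, ?_, ?_⟩
  · rw [Measure.map_apply hψ measurableSet_Iic]
    refine measure_mono_null (fun x hx => ?_) (measure_union_null hzero hone)
    by_contra hc
    simp only [mem_union, mem_singleton_iff, not_or] at hc
    have h0 : 0 < (x : ℝ) := unitInterval.pos_iff_ne_zero.2 hc.1
    have h1 : (x : ℝ) < 1 := unitInterval.lt_one_iff_ne_one.2 hc.2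
    have hlog := log_neg h0 h1
    have : -2 * log x ≤ 0 := hx
    linarith
  · intro u hu
    rw [lintegral_map (by fun_prop) hψ]
    rcases hu.eq_or_lt with rfl | hu
    · simp [hG0]
    have hfin : G u ≠ ∞ := by
      refine ne_top_of_le_ne_top ENNReal.one_ne_top ?_
      rw [hG u hu.le, ← hv1]
      exact lintegral_mono_set (Ioi_subset_Ioi hu.le)
    rw [← ENNReal.ofReal_toReal hfin, hρ u hu, ofReal_integral_eq_lintegral_ofReal (hint u hu)
      (.of_forall fun x => rpow_nonneg x.2.1 u)]
    refine lintegral_congr_ae ?_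
    have hne : ∀ᵐ x ∂ρ, x ≠ 0 := by rw [ae_iff]; simpa using hzero
    filter_upwards [hne] with x hx
    have h0 : 0 < (x : ℝ) := unitInterval.pos_iff_ne_zero.2 hx
    rw [rpow_def_of_pos h0]
    congr 2
    ring

/-- The mixture of centred Gaussian density generators with precision `ξ` distributed as `ν`. -/
noncomputable def gaussianMixture (ν : Measure ℝ) (k : ℕ) (u : ℝ) : ℝ≥0∞ :=
  ∫⁻ ξ, ENNReal.ofReal ((ξ / (2 * π)) ^ ((k : ℝ) / 2) * exp (-u * ξ / 2)) ∂ν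

theorem measurable_gaussianMixture (ν : Measure ℝ) [SFinite ν] (k : ℕ) :
    Measurable (gaussianMixture ν k) :=
  Measurable.lintegral_prod_right' (f := fun p : ℝ × ℝ =>
    ENNReal.ofReal ((p.2 / (2 * π)) ^ ((k : ℝ) / 2) * exp (-p.1 * p.2 / 2))) (by fun_prop)

theorem lintegral_gaussian_generator (k : ℕ) (u : ℝ) {ξ : ℝ} (hξ : 0 < ξ) :
    ∫⁻ t : ℝ, ENNReal.ofReal
        ((ξ / (2 * π)) ^ (((k + 1 : ℕ) : ℝ) / 2) * exp (-(u + t ^ 2) * ξ / 2)) =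
      ENNReal.ofReal ((ξ / (2 * π)) ^ ((k : ℝ) / 2) * exp (-u * ξ / 2)) := by
  have hpi := pi_pos
  have hq : 0 < ξ / (2 * π) := by positivity
  have h1 : ∀ t : ℝ, (ξ / (2 * π)) ^ (((k + 1 : ℕ) : ℝ) / 2) * exp (-(u + t ^ 2) * ξ / 2) =
      (ξ / (2 * π)) ^ (((k + 1 : ℕ) : ℝ) / 2) * exp (-u * ξ / 2) * exp (-(ξ / 2) * t ^ 2) := by
    intro t
    rw [mul_assoc, ← exp_add]
    congr 2
    ring
  simp_rw [h1]
  rw [← ofReal_integral_eq_lintegral_ofReal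
    ((integrable_exp_neg_mul_sq (by positivity)).const_mul _)
    (.of_forall fun t => by positivity), integral_const_mul, integral_gaussian]
  have h2 : π / (ξ / 2) = (ξ / (2 * π))⁻¹ := by field_simp
  have h3 : (((k + 1 : ℕ) : ℝ) / 2) = (k : ℝ) / 2 + 1 / 2 := by push_cast; ring
  rw [h2, h3, rpow_add hq, ← sqrt_eq_rpow, sqrt_inv]
  congr 1
  have : √(ξ / (2 * π)) ≠ 0 := (sqrt_pos.2 hq).ne'
  field_simp

theorem lineMarginal_gaussianMixture {ν : Measure ℝ} [SFinite ν] (hν : ν (Iic 0) = 0)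
    (k : ℕ) (u : ℝ) : lineMarginal (gaussianMixture ν (k + 1)) u = gaussianMixture ν k u := by
  unfold lineMarginal gaussianMixture
  rw [lintegral_lintegral_swap (Measurable.aemeasurable (by fun_prop))]
  refine lintegral_congr_ae ?_
  have hpos : ∀ᵐ ξ ∂ν, 0 < ξ := by
    rw [ae_iff]
    simpa [Iic] using hν
  filter_upwards [hpos] with ξ hξ
  exact lintegral_gaussian_generator k u hξ

theorem ae_eq_of_lintegral_Ioi_eq {A B : ℝ → ℝ≥0∞} (hA : Measurable A) (hB : Measurable B)
    (hfin : ∀ u > (0 : ℝ), ∫⁻ r in Ioi u, A r ≠ ∞)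
    (h : ∀ u > (0 : ℝ), ∫⁻ r in Ioi u, A r = ∫⁻ r in Ioi u, B r) :
    ∀ᵐ r ∂(volume.restrict (Ioi (0 : ℝ))), A r = B r := by
  refine ae_Ioi_of_forall_gt fun v hv => ?_
  have hv : 0 < v := hv
  rw [← Filter.EventuallyEq,
    ← withDensity_eq_iff hA.aemeasurable hB.aemeasurable (hfin v hv)]
  have : IsFiniteMeasure ((volume.restrict (Ioi v)).withDensity A) :=
    isFiniteMeasure_withDensity (hfin v hv)
  refine Measure.ext_of_Ici _ _ fun a => ?_
  rw [withDensity_apply _ measurableSet_Ici, withDensity_apply _ measurableSet_Ici,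
    Measure.restrict_restrict measurableSet_Ici]
  rcases le_or_gt a v with hav | hva
  · rw [inter_eq_right.2 (show Ioi v ⊆ Ici a from fun r hr => hav.trans (le_of_lt hr)), h v hv]
  · rw [inter_eq_left.2 (show Ici a ⊆ Ioi v from fun r hr => hva.trans_le hr),
      ← restrict_Ioi_eq_restrict_Ici, h a (hv.trans hva)]

theorem consistent_ne_top {g : ℕ → ℝ → ℝ≥0∞}
    (hg : ∀ k, Measurable (g k))
    (hT : ∀ k, ∀ u ≥ (0 : ℝ), lineMarginal (g (k + 1)) u = g k u)
    (h0 : g 0 0 = 1) (k : ℕ) {u : ℝ} (hu : 0 < u) : g k u ≠ ∞ := by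
  have hanti : ∀ k, ∀ u ≥ (0 : ℝ), ∀ v ≥ u, g k v ≤ g k u := by
    intro k u hu v hv
    rw [consistent_eq_lintegral_Ioi hg hT k hu,
      consistent_eq_lintegral_Ioi hg hT k (hu.trans hv)]
    gcongr
  induction k generalizing u with
  | zero => exact ne_top_of_le_ne_top (by simp [h0]) (hanti 0 0 le_rfl u hu.le)
  | succ k ih =>
    have h1 : lineMarginal (g (k + 1)) (u / 2) ≠ ∞ := by
      rw [hT k _ (by positivity)]
      exact ih (by positivity)
    obtain ⟨r, hr, hfin⟩ := exists_mem_Ioo_of_ae_Ioi (half_lt_self hu)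
      (ae_lt_top_of_lineMarginal_ne_top (hg _) h1)
    exact ne_top_of_le_ne_top hfin.ne
      (hanti (k + 1) r (by linarith [hr.1]) u hr.2.le)

theorem exists_measure_consistent_eq_gaussianMixture {g : ℕ → ℝ → ℝ≥0∞}
    (hg : ∀ k, Measurable (g k))
    (hT : ∀ k, ∀ u ≥ (0 : ℝ), lineMarginal (g (k + 1)) u = g k u) (h0 : g 0 0 = 1) :
    ∃ ν : Measure ℝ, IsProbabilityMeasure ν ∧ ν (Iic 0) = 0 ∧
      ∀ k, ∀ u ≥ (0 : ℝ), g k u = gaussianMixture ν k u := by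
  obtain ⟨ρ, hρ⟩ := exists_probabilityMeasure_toReal_eq_integral_rpow h0
    (w := fun N r => ENNReal.ofReal (π ^ (N + 1) / N.factorial) * g (2 * N + 2) r)
    (fun N => (hg _).const_mul _)
    (fun N u hu => consistent_zero_eq_lintegral_pow hg hT N hu)
  obtain ⟨ν, hν, hν0, hGν⟩ := exists_measure_eq_lintegral_exp h0
    (v := fun r => ENNReal.ofReal π * g 2 r) (fun u hu => by
      rw [lintegral_const_mul _ (hg 2)]
      exact consistent_eq_lintegral_Ioi hg hT 0 hu) hρ
  refine ⟨ν, hν, hν0, fun k => ?_⟩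
  induction k with
  | zero =>
    intro u hu
    rw [hGν u hu]
    simp [gaussianMixture]
  | succ k ih =>
    have hm := measurable_gaussianMixture ν
    have hpi0 : ENNReal.ofReal π ≠ 0 := by simp [pi_pos]
    have hae := ae_eq_of_lintegral_Ioi_eq (hg (k + 2)) (hm (k + 2))
      (fun u hu htop => consistent_ne_top hg hT h0 k hu (by
        rw [consistent_eq_lintegral_Ioi hg hT k hu.le, htop, ENNReal.mul_top hpi0]))
      (fun u hu => by
        have h := ih u hu.le
        rw [consistent_eq_lintegral_Ioi hg hT k hu.le,
          consistent_eq_lintegral_Ioi hm (fun k u _ => lineMarginal_gaussianMixture hν0 k u)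
            k hu.le] at h
        exact (ENNReal.mul_right_inj hpi0 ENNReal.ofReal_ne_top).1 h)
    intro u hu
    rw [← hT (k + 1) u hu, ← lineMarginal_gaussianMixture hν0 (k + 1) u]
    exact lineMarginal_congr
      (ae_restrict_of_ae_restrict_of_subset (Ioi_subset_Ioi hu) hae)

theorem iterate_lineMarginal_ofReal_zero {f : ℝ → ℝ} (hf : Measurable f)
    (hf0 : ∀ u ≥ (0 : ℝ), 0 ≤ f u) {n : ℕ}
    (hf1 : ∫ y : Fin n → ℝ, f (∑ i, y i ^ 2) = 1) :
    lineMarginal^[n] (fun u => ENNReal.ofReal (f u)) 0 = 1 := by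
  rw [← lintegral_pi_sum_sq (by fun_prop)]
  simp only [zero_add]
  rw [← ofReal_integral_eq_lintegral_ofReal
    (Integrable.of_integral_ne_zero (by rw [hf1]; exact one_ne_zero))
    (.of_forall fun y => hf0 _ (Finset.sum_nonneg fun i _ => sq_nonneg _)), hf1,
    ENNReal.ofReal_one]

theorem ae_lineMarginal_ofReal_eq {f₁ f₂ : ℝ → ℝ} (hf : Measurable f₂)
    (hf0 : ∀ u ≥ (0 : ℝ), 0 ≤ f₂ u) {n : ℕ} (hn : n ≠ 0)
    (hf1 : ∫ y : Fin (n + 1) → ℝ, f₂ (∑ i, y i ^ 2) = 1)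
    (h : ∀ u ≥ (0 : ℝ), ∫ t : ℝ, f₂ (u + t ^ 2) = f₁ u) :
    ∀ᵐ u ∂(volume.restrict (Ioi (0 : ℝ))),
      lineMarginal (fun u => ENNReal.ofReal (f₂ u)) u = ENNReal.ofReal (f₁ u) := by
  have hF : Measurable fun u => ENNReal.ofReal (f₂ u) := by fun_prop
  have hfin := ae_lt_top_of_iterate_lineMarginal_ne_top (u := 0) (measurable_lineMarginal hF) hn
    (by rw [← Function.iterate_succ_apply, iterate_lineMarginal_ofReal_zero hf hf0 hf1]; simp)
  filter_upwards [hfin, ae_restrict_mem measurableSet_Ioi] with u hu hu0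
  have hu0 : 0 ≤ u := le_of_lt hu0
  have hnn : ∀ t : ℝ, 0 ≤ f₂ (u + t ^ 2) := fun t => hf0 _ (by positivity)
  have hint : Integrable fun t : ℝ => f₂ (u + t ^ 2) :=
    (lintegral_ofReal_ne_top_iff_integrable (Measurable.aestronglyMeasurable (by fun_prop))
      (.of_forall hnn)).1 hu.ne
  rw [← h u hu0, ofReal_integral_eq_lintegral_ofReal hint (.of_forall hnn)]
  rfl

/-- Kano's characterization, converse direction: a consistent family of
density generators arises from a mixing distribution, i.e. there is a probability
measure `ν` supported on `(0,∞)` such that for every `n ≥ 1` and Lebesgue-a.e. `u ≥ 0`,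
`f n u = ∫ (ξ/(2π))^{n/2} e^{-uξ/2} dν(ξ)`. -/
theorem kano_converse
    (f : ℕ → ℝ → ℝ) (hf_meas : ∀ n, Measurable (f n))
    (hf_nonneg : ∀ n, ∀ u ≥ (0 : ℝ), 0 ≤ f n u)
    (hf_prob : ∀ n ≥ 1, ∫ y : Fin n → ℝ, f n (∑ i, y i ^ 2) = 1)
    (hf_consistent : ∀ n ≥ 1, ∀ u ≥ (0 : ℝ),
      (∫ t : ℝ, f (n + 1) (u + t ^ 2)) = f n u) :
    ∃ ν : Measure ℝ, IsProbabilityMeasure ν ∧ ν (Set.Iic 0) = 0 ∧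
      ∀ n ≥ 1, ∀ᵐ u ∂(volume.restrict (Set.Ici (0 : ℝ))),
        f n u = ∫ ξ, (ξ / (2 * π)) ^ ((n : ℝ) / 2) * Real.exp (-u * ξ / 2) ∂ν := by
  set g : ℕ → ℝ → ℝ≥0∞ := fun k => lineMarginal fun u => ENNReal.ofReal (f (k + 1) u)
  have hgm : ∀ k, Measurable (g k) := fun k =>
    measurable_lineMarginal (hf_meas (k + 1)).ennreal_ofReal
  have hgf : ∀ n ≥ 1, ∀ᵐ u ∂(volume.restrict (Ioi (0 : ℝ))), g n u = ENNReal.ofReal (f n u) :=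
    fun n hn => ae_lineMarginal_ofReal_eq (hf_meas _) (hf_nonneg _) (by omega)
      (hf_prob (n + 1) (by omega)) (hf_consistent n hn)
  have hT : ∀ k, ∀ u ≥ (0 : ℝ), lineMarginal (g (k + 1)) u = g k u := fun k u hu =>
    lineMarginal_congr
      (ae_restrict_of_ae_restrict_of_subset (Ioi_subset_Ioi hu) (hgf (k + 1) (by omega)))
  have h0 : g 0 0 = 1 :=
    iterate_lineMarginal_ofReal_zero (hf_meas 1) (hf_nonneg 1) (hf_prob 1 le_rfl)
  obtain ⟨ν, hν, hν0, hgν⟩ := exists_measure_consistent_eq_gaussianMixture hgm hT h0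
  refine ⟨ν, hν, hν0, fun n hn => ?_⟩
  have hpos : ∀ᵐ ξ ∂ν, 0 < ξ := by
    rw [ae_iff]
    simpa [Iic] using hν0
  rw [← restrict_Ioi_eq_restrict_Ici]
  filter_upwards [hgf n hn, ae_restrict_mem measurableSet_Ioi] with u hu hu0
  have hu0 : 0 ≤ u := le_of_lt hu0
  rw [hgν n u hu0] at hu
  rw [integral_eq_lintegral_of_nonneg_ae _ (Measurable.aestronglyMeasurable (by fun_prop)),
    ← ENNReal.toReal_ofReal (hf_nonneg n u hu0), ← hu, gaussianMixture]
  filter_upwards [hpos] with ξ hξ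
  have hpi := pi_pos
  simp only [Pi.zero_apply]
  positivity
end

section
/- (Proposition 1, conditional covariance.) With the notation of Proposition 1, assume additionally that ∫_0^∞ ξ^{n1/2 - 1} e^{-u1 ξ/2} p(ξ) dξ < ∞. Then ∫_{ℝ^{n2}} (y2 - μ_{2|1})(y2 - μ_{2|1})ᵀ · [c |Σ_{22|1}|^{-1/2} (2π)^{-n2/2} ∫_0^∞ ξ^{n/2} e^{-(u_{2|1}(y1,y2) + u1)ξ/2} p(ξ) dξ] dy2 = [ (∫_0^∞ ξ^{n1/2 - 1} e^{-u1 ξ/2} p(ξ) dξ) / (∫_0^∞ ξ^{n1/2} e^{-u1 ξ/2} p(ξ) dξ) ] · Σ_{22|1}, where c⁻¹ = ∫_0^∞ ξ^{n1/2} e^{-ξ u1/2} p(ξ) dξ; i.e., Cov(y2 | y1) = E[ξ̂⁻¹] Σ_{22|1} where ξ̂ has density p(ξ | y1) ∝ ξ^{n1/2} e^{-ξ u1/2} p(ξ). -/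
open MeasureTheory Matrix Real

lemma integrable_pow_mul_exp_neg_sq_div_two (k : ℕ) :
    Integrable fun x : ℝ => x ^ k * Real.exp (-x ^ 2 / 2) := by
  have h := integrable_rpow_mul_exp_neg_mul_sq (b := 1 / 2) (by norm_num) (s := k)
    (lt_of_lt_of_le (by norm_num) (Nat.cast_nonneg k))
  refine h.congr (.of_forall fun x => ?_)
  simp only [rpow_natCast]
  ring_nf

lemma integral_exp_neg_sq_div_two : ∫ x : ℝ, Real.exp (-x ^ 2 / 2) = √(2 * π) := by
  have h := integral_gaussian (1 / 2)
  rw [show π / (1 / 2) = 2 * π by ring] at h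
  rw [← h]
  congr 1 with x
  ring_nf

lemma integral_mul_exp_neg_sq_div_two : ∫ x : ℝ, x * Real.exp (-x ^ 2 / 2) = 0 := by
  have h := integral_neg_eq_self (fun x : ℝ => x * Real.exp (-x ^ 2 / 2)) volume
  simp only [neg_sq, neg_mul, integral_neg] at h
  linarith

lemma integral_sq_mul_exp_neg_sq_div_two :
    ∫ x : ℝ, x ^ 2 * Real.exp (-x ^ 2 / 2) = √(2 * π) := by
  have h := ProbabilityTheory.variance_fun_id_gaussianReal (μ := 0) (v := 1)
  rw [ProbabilityTheory.variance_eq_integral (by fun_prop),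
    ProbabilityTheory.integral_id_gaussianReal,
    ProbabilityTheory.integral_gaussianReal_eq_integral_smul one_ne_zero] at h
  simp only [ProbabilityTheory.gaussianPDFReal, NNReal.coe_one, mul_one, sub_zero, smul_eq_mul,
    mul_assoc, integral_const_mul] at h
  rw [inv_mul_eq_iff_eq_mul₀ (by positivity), mul_one] at h
  rw [← h]
  congr 1 with x
  ring

/-- Second moments of the standard Gaussian weight `exp (-‖z‖² / 2)`. -/
lemma standard_gaussian_second_moment {ι : Type*} [Fintype ι] [DecidableEq ι] (k l : ι) :
    Integrable (fun z : ι → ℝ => z k * z l * Real.exp (-(z ⬝ᵥ z) / 2)) ∧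
      ∫ z : ι → ℝ, z k * z l * Real.exp (-(z ⬝ᵥ z) / 2) =
        if k = l then √(2 * π) ^ Fintype.card ι else 0 := by
  set f : ι → ℝ → ℝ := fun m x =>
    x ^ ((if m = k then 1 else 0) + (if m = l then 1 else 0)) * Real.exp (-x ^ 2 / 2) with hf
  have key : (fun z : ι → ℝ => z k * z l * Real.exp (-(z ⬝ᵥ z) / 2)) =
      fun z => ∏ m, f m (z m) := by
    ext z
    simp only [hf, Finset.prod_mul_distrib, pow_add, pow_ite, pow_one, pow_zero,
      Finset.prod_ite_eq', Finset.mem_univ, if_true, ← Real.exp_sum]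
    simp only [dotProduct, ← Finset.sum_div, Finset.sum_neg_distrib, sq]
  rw [key]
  refine ⟨Integrable.fintype_prod fun m => integrable_pow_mul_exp_neg_sq_div_two _, ?_⟩
  rw [integral_fintype_prod_volume_eq_prod]
  split_ifs with hkl
  · subst hkl
    rw [← Finset.card_univ, ← Finset.prod_const]
    refine Finset.prod_congr rfl fun m _ => ?_
    by_cases hm : m = k
    · simpa [hf, hm] using integral_sq_mul_exp_neg_sq_div_two
    · simpa [hf, hm] using integral_exp_neg_sq_div_two
  · refine Finset.prod_eq_zero (Finset.mem_univ k) ?_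
    simpa [hf, hkl] using integral_mul_exp_neg_sq_div_two

open scoped MatrixOrder in
/-- Second moments of the Gaussian weight with covariance matrix `A`. -/
lemma gaussian_second_moment {ι : Type*} [Fintype ι] [DecidableEq ι] {A : Matrix ι ι ℝ}
    (hA : A.PosDef) (i j : ι) :
    Integrable (fun y : ι → ℝ => y i * y j * Real.exp (-(y ⬝ᵥ (A⁻¹ *ᵥ y)) / 2)) ∧
      ∫ y : ι → ℝ, y i * y j * Real.exp (-(y ⬝ᵥ (A⁻¹ *ᵥ y)) / 2) =
        √A.det * √(2 * π) ^ Fintype.card ι * A i j := by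
  obtain ⟨B, hB⟩ : ∃ B : Matrix ι ι ℝ, A = B * Bᵀ := by
    have hs := CFC.sqrt_mul_sqrt_self A hA.posSemidef.nonneg
    have hh : (CFC.sqrt A).IsHermitian := (CFC.sqrt_nonneg A).posSemidef.isHermitian
    refine ⟨CFC.sqrt A, ?_⟩
    rw [← conjTranspose_eq_transpose_of_trivial, hh.eq, hs]
  have hdetA : A.det = B.det ^ 2 := by rw [hB, det_mul, det_transpose, sq]
  have hdet : B.det ≠ 0 := fun h => hA.det_pos.ne' (by rw [hdetA, h]; simp)
  have hBu : IsUnit B.det := hdet.isUnit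
  have hquad (z : ι → ℝ) : (B *ᵥ z) ⬝ᵥ (A⁻¹ *ᵥ (B *ᵥ z)) = z ⬝ᵥ z := by
    rw [mulVec_mulVec, hB, Matrix.mul_inv_rev, Matrix.mul_assoc, nonsing_inv_mul _ hBu,
      Matrix.mul_one, ← transpose_nonsing_inv, dotProduct_mulVec, ← mulVec_transpose,
      transpose_transpose, mulVec_mulVec, nonsing_inv_mul _ hBu, one_mulVec]
  set g : (ι → ℝ) → ℝ := fun y => y i * y j * Real.exp (-(y ⬝ᵥ (A⁻¹ *ᵥ y)) / 2) with hg
  have hgB : (fun z => g (B *ᵥ z)) = fun z : ι → ℝ =>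
      ∑ k, ∑ l, B i k * B j l * (z k * z l * Real.exp (-(z ⬝ᵥ z) / 2)) := by
    ext z
    simp only [hg, hquad]
    simp only [mulVec, dotProduct, Finset.sum_mul_sum]
    simp only [Finset.sum_mul]
    refine Finset.sum_congr rfl fun k _ => Finset.sum_congr rfl fun l _ => by ring
  have hint : Integrable (fun z => g (B *ᵥ z)) := by
    rw [hgB]
    exact integrable_finsetSum _ fun k _ => integrable_finsetSum _ fun l _ =>
      (standard_gaussian_second_moment k l).1.const_mul _
  have hval : ∫ z, g (B *ᵥ z) = √(2 * π) ^ Fintype.card ι * A i j := by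
    rw [hgB, integral_finsetSum _ fun k _ => integrable_finsetSum _ fun l _ =>
      (standard_gaussian_second_moment k l).1.const_mul _]
    simp_rw [integral_finsetSum _ fun l _ =>
      (standard_gaussian_second_moment _ l).1.const_mul _, integral_const_mul,
      (standard_gaussian_second_moment _ _).2]
    simp [hB, Matrix.mul_apply, Finset.mul_sum, mul_comm]
  have hmap := Real.map_matrix_volume_pi_eq_smul_volume_pi hdet
  have hemb : MeasurableEmbedding (toLin' B) :=
    ((LinearEquiv.ofIsUnitDet (f := toLin' B) (v := Pi.basisFun ℝ ι) (v' := Pi.basisFun ℝ ι)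
      (by simpa using hBu)).toContinuousLinearEquiv.toHomeomorph).measurableEmbedding
  have hc : ENNReal.ofReal |B.det⁻¹| ≠ 0 := by simpa using hdet
  constructor
  · have h := hemb.integrable_map_iff (μ := volume) (g := g)
    rw [hmap, integrable_smul_measure hc ENNReal.ofReal_ne_top] at h
    exact h.2 hint
  · have h := hemb.integral_map (μ := volume) g
    rw [hmap, integral_smul_measure, ENNReal.toReal_ofReal (abs_nonneg _)] at h
    simp only [toLin'_apply, hval, smul_eq_mul, abs_inv] at h
    rw [inv_mul_eq_iff_eq_mul₀ (by positivity)] at h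
    rw [h, hdetA, sqrt_sq_eq_abs, mul_assoc]

/-- Second moments of the Gaussian weight with precision matrix `ξ A⁻¹`. -/
lemma scaled_gaussian_second_moment {ι : Type*} [Fintype ι] [DecidableEq ι] {A : Matrix ι ι ℝ}
    (hA : A.PosDef) {ξ : ℝ} (hξ : 0 < ξ) (i j : ι) :
    Integrable (fun y : ι → ℝ => y i * y j * Real.exp (-(y ⬝ᵥ (A⁻¹ *ᵥ y) * ξ) / 2)) ∧
      ∫ y : ι → ℝ, y i * y j * Real.exp (-(y ⬝ᵥ (A⁻¹ *ᵥ y) * ξ) / 2) =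
        √A.det * √(2 * π) ^ Fintype.card ι * A i j * ξ ^ (-(Fintype.card ι : ℝ) / 2 - 1) := by
  have hinv : (ξ⁻¹ • A)⁻¹ = ξ • A⁻¹ := by
    refine inv_eq_left_inv ?_
    rw [smul_mul_smul_comm, mul_inv_cancel₀ hξ.ne', one_smul,
      nonsing_inv_mul _ hA.det_pos.ne'.isUnit]
  have hpow : √(ξ⁻¹ ^ Fintype.card ι) * ξ⁻¹ = ξ ^ (-(Fintype.card ι : ℝ) / 2 - 1) := by
    rw [sqrt_eq_rpow, ← rpow_natCast, inv_rpow hξ.le, ← rpow_neg hξ.le, ← rpow_mul hξ.le,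
      rpow_sub_one hξ.ne', div_eq_mul_inv]
    congr 2
    ring
  have h := gaussian_second_moment (hA.smul (inv_pos.2 hξ)) i j
  simp only [hinv, smul_mulVec, dotProduct_smul, smul_eq_mul, det_smul, Matrix.smul_apply,
    mul_comm ξ (_ ⬝ᵥ _), sqrt_mul (pow_nonneg (inv_pos.2 hξ).le _)] at h
  refine ⟨h.1, h.2.trans ?_⟩
  rw [← hpow]
  ring

/-- Second moments of a mixture of the Gaussian weights with precision matrices `ξ A⁻¹`. -/
lemma gaussian_mixture_second_moment {ι : Type*} [Fintype ι] [DecidableEq ι] {A : Matrix ι ι ℝ}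
    (hA : A.PosDef) {w : ℝ → ℝ} (hw : Measurable w) (hw0 : ∀ ξ, 0 < ξ → 0 ≤ w ξ)
    (hint : IntegrableOn (fun ξ => ξ ^ (-(Fintype.card ι : ℝ) / 2 - 1) * w ξ) (Set.Ioi 0))
    (i j : ι) :
    ∫ y : ι → ℝ, y i * y j *
        ∫ ξ in Set.Ioi (0 : ℝ), Real.exp (-(y ⬝ᵥ (A⁻¹ *ᵥ y) * ξ) / 2) * w ξ =
      √A.det * √(2 * π) ^ Fintype.card ι * A i j *
        ∫ ξ in Set.Ioi (0 : ℝ), ξ ^ (-(Fintype.card ι : ℝ) / 2 - 1) * w ξ := by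
  set F : ι → ι → (ι → ℝ) × ℝ → ℝ := fun i j x =>
    x.1 i * x.1 j * Real.exp (-(x.1 ⬝ᵥ (A⁻¹ *ᵥ x.1) * x.2) / 2) * w x.2 with hF
  have hmeas (i j : ι) :
      AEStronglyMeasurable (F i j) (volume.prod (volume.restrict (Set.Ioi 0))) := by
    refine Measurable.aestronglyMeasurable ?_
    have hq : Measurable fun y : ι → ℝ => y ⬝ᵥ (A⁻¹ *ᵥ y) := by
      simp only [dotProduct, mulVec]
      fun_prop
    simp only [hF]
    fun_prop
  have hval (i j : ι) {ξ : ℝ} (hξ : 0 < ξ) : ∫ y, F i j (y, ξ) =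
      √A.det * √(2 * π) ^ Fintype.card ι * A i j *
        (ξ ^ (-(Fintype.card ι : ℝ) / 2 - 1) * w ξ) := by
    simp only [hF, integral_mul_const, (scaled_gaussian_second_moment hA hξ i j).2]
    ring
  have hdiag (i : ι) : Integrable (F i i) (volume.prod (volume.restrict (Set.Ioi 0))) := by
    rw [integrable_prod_iff' (hmeas i i)]
    constructor
    · filter_upwards [ae_restrict_mem measurableSet_Ioi] with ξ hξ
      exact (scaled_gaussian_second_moment hA hξ i i).1.mul_const (w ξ)
    · refine (hint.const_mul (√A.det * √(2 * π) ^ Fintype.card ι * A i i)).congr ?_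
      filter_upwards [ae_restrict_mem measurableSet_Ioi] with ξ hξ
      rw [← hval i i hξ]
      refine integral_congr_ae (.of_forall fun y => (norm_of_nonneg ?_).symm)
      have := hw0 ξ hξ
      have := mul_self_nonneg (y i)
      simp only [hF]
      positivity
  have hFint : Integrable (F i j) (volume.prod (volume.restrict (Set.Ioi 0))) := by
    refine ((hdiag i).add (hdiag j)).mono (hmeas i j) (.of_forall fun x => ?_)
    simp only [hF, Pi.add_apply, ← add_mul, norm_mul]
    gcongr
    rw [← norm_mul, norm_eq_abs, norm_eq_abs]
    refine le_trans ?_ (le_abs_self _)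
    rw [abs_le]
    constructor <;> nlinarith [sq_nonneg (x.1 i + x.1 j), sq_nonneg (x.1 i - x.1 j),
      sq_nonneg (x.1 i), sq_nonneg (x.1 j)]
  calc _ = ∫ y, ∫ ξ in Set.Ioi (0 : ℝ), F i j (y, ξ) := by
        simp only [hF, mul_assoc, integral_const_mul]
    _ = ∫ ξ in Set.Ioi (0 : ℝ), ∫ y, F i j (y, ξ) :=
        integral_integral_swap (f := fun y ξ => F i j (y, ξ)) hFint
    _ = _ := by
        rw [← integral_const_mul]
        exact setIntegral_congr_fun measurableSet_Ioi fun ξ hξ => hval i j hξ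

lemma posDef_schur_complement {m n : Type*} [Fintype m] [Fintype n] [DecidableEq m]
    [DecidableEq n] {A : Matrix m m ℝ} {B : Matrix m n ℝ} {D : Matrix n n ℝ}
    (h : (fromBlocks A B Bᵀ D).PosDef) : (D - Bᵀ * A⁻¹ * B).PosDef := by
  have hA : A.PosDef := h.submatrix Sum.inl_injective
  let := hA.isUnit.invertible
  have hpsd : (D - Bᵀ * A⁻¹ * B).PosSemidef :=
    (PosDef.fromBlocks₁₁ B D hA).1 h.posSemidef
  rw [hpsd.posDef_iff_det_ne_zero]
  intro h0
  have hd := det_fromBlocks₁₁ A B Bᵀ D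
  rw [invOf_eq_nonsing_inv, h0, mul_zero] at hd
  exact h.det_pos.ne' hd

/-- Proposition 1, conditional covariance: the covariance of the
conditional elliptical density of `y2` given `y1` equals `E[ξ̂⁻¹] Σ_{22|1}`, where
`ξ̂` follows the posterior mixing density `p(ξ|y1) ∝ ξ^{n1/2} e^{-ξ u1/2} p(ξ)`. -/
theorem elliptical_conditional_covariance
    (n1 n2 : ℕ) (p : ℝ → ℝ) (hp_meas : Measurable p) (hp_nonneg : ∀ ξ, 0 ≤ p ξ)
    (hp_zero : ∀ ξ ≤ (0 : ℝ), p ξ = 0)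
    (hp_int : ∫ ξ in Set.Ioi (0 : ℝ), p ξ = 1)
    (S11 : Matrix (Fin n1) (Fin n1) ℝ) (S12 : Matrix (Fin n1) (Fin n2) ℝ)
    (S21 : Matrix (Fin n2) (Fin n1) ℝ) (S22 : Matrix (Fin n2) (Fin n2) ℝ)
    (hS21 : S21 = S12ᵀ)
    (S : Matrix (Fin n1 ⊕ Fin n2) (Fin n1 ⊕ Fin n2) ℝ)
    (hS : S = fromBlocks S11 S12 S21 S22) (hSpd : S.PosDef)
    (μ1 : Fin n1 → ℝ) (μ2 : Fin n2 → ℝ)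
    (μ21 : (Fin n1 → ℝ) → Fin n2 → ℝ)
    (hμ21 : ∀ y1, μ21 y1 = μ2 + S21 *ᵥ (S11⁻¹ *ᵥ (y1 - μ1)))
    (S221 : Matrix (Fin n2) (Fin n2) ℝ) (hS221 : S221 = S22 - S21 * S11⁻¹ * S12)
    (u1 : (Fin n1 → ℝ) → ℝ)
    (hu1 : ∀ y1, u1 y1 = (y1 - μ1) ⬝ᵥ (S11⁻¹ *ᵥ (y1 - μ1)))
    (u21 : (Fin n1 → ℝ) → (Fin n2 → ℝ) → ℝ)
    (hu21 : ∀ y1 y2, u21 y1 y2 = (y2 - μ21 y1) ⬝ᵥ (S221⁻¹ *ᵥ (y2 - μ21 y1))) :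
    ∀ y1 : Fin n1 → ℝ,
      IntegrableOn
        (fun ξ => ξ ^ ((n1 : ℝ) / 2) * Real.exp (-(ξ * u1 y1) / 2) * p ξ)
        (Set.Ioi (0 : ℝ)) →
      0 < (∫ ξ in Set.Ioi (0 : ℝ),
            ξ ^ ((n1 : ℝ) / 2) * Real.exp (-(ξ * u1 y1) / 2) * p ξ) →
      IntegrableOn
        (fun ξ => ξ ^ ((n1 : ℝ) / 2 - 1) *
          Real.exp (-(u1 y1 * ξ) / 2) * p ξ) (Set.Ioi (0 : ℝ)) →
      ∀ i j : Fin n2,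
      (∫ y2 : Fin n2 → ℝ,
        (y2 i - μ21 y1 i) * (y2 j - μ21 y1 j) *
          ((∫ ξ in Set.Ioi (0 : ℝ),
              ξ ^ ((n1 : ℝ) / 2) * Real.exp (-(ξ * u1 y1) / 2) * p ξ)⁻¹ *
            (S221.det ^ (-(1 : ℝ) / 2) * (2 * π) ^ (-(n2 : ℝ) / 2) *
              ∫ ξ in Set.Ioi (0 : ℝ),
                ξ ^ (((n1 : ℝ) + (n2 : ℝ)) / 2) *
                  Real.exp (-((u21 y1 y2 + u1 y1) * ξ) / 2) * p ξ))) =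
        ((∫ ξ in Set.Ioi (0 : ℝ),
            ξ ^ ((n1 : ℝ) / 2 - 1) * Real.exp (-(u1 y1 * ξ) / 2) * p ξ) /
          (∫ ξ in Set.Ioi (0 : ℝ),
            ξ ^ ((n1 : ℝ) / 2) * Real.exp (-(u1 y1 * ξ) / 2) * p ξ)) *
          S221 i j := by
  intro y1 _ _ h3 i j
  have hpd : S221.PosDef := by
    rw [hS221, hS21]
    exact posDef_schur_complement (hS21 ▸ hS ▸ hSpd)
  set w : ℝ → ℝ := fun ξ =>
    ξ ^ (((n1 : ℝ) + (n2 : ℝ)) / 2) * Real.exp (-(u1 y1 * ξ) / 2) * p ξ with hw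
  have hwpow {ξ : ℝ} (hξ : 0 < ξ) : ξ ^ (-(n2 : ℝ) / 2 - 1) * w ξ =
      ξ ^ ((n1 : ℝ) / 2 - 1) * Real.exp (-(u1 y1 * ξ) / 2) * p ξ := by
    simp only [hw, ← mul_assoc, ← rpow_add hξ]
    ring_nf
  have hmix := gaussian_mixture_second_moment hpd (w := w) (by fun_prop)
    (fun ξ hξ => by have := hp_nonneg ξ; positivity)
    (h3.congr_fun (fun ξ hξ => by simpa using (hwpow hξ).symm) measurableSet_Ioi) i j
  simp only [Fintype.card_fin] at hmix
  rw [setIntegral_congr_fun measurableSet_Ioi fun ξ hξ => hwpow hξ] at hmix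
  have hinner (y2 : Fin n2 → ℝ) : (∫ ξ in Set.Ioi (0 : ℝ),
      ξ ^ (((n1 : ℝ) + (n2 : ℝ)) / 2) * Real.exp (-((u21 y1 y2 + u1 y1) * ξ) / 2) * p ξ) =
      ∫ ξ in Set.Ioi (0 : ℝ),
        Real.exp (-((y2 - μ21 y1) ⬝ᵥ (S221⁻¹ *ᵥ (y2 - μ21 y1)) * ξ) / 2) * w ξ := by
    congr 1 with ξ
    rw [hu21, show ∀ a b : ℝ, -((a + b) * ξ) / 2 = -(a * ξ) / 2 + -(b * ξ) / 2 by intros; ring,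
      Real.exp_add]
    simp only [hw]
    ring
  have hconst : S221.det ^ (-(1 : ℝ) / 2) * (2 * π) ^ (-(n2 : ℝ) / 2) *
      (√S221.det * √(2 * π) ^ n2) = 1 := by
    have hd := hpd.det_pos
    rw [sqrt_eq_rpow, sqrt_eq_rpow, ← rpow_mul_natCast (by positivity), mul_mul_mul_comm,
      ← rpow_add hd, ← rpow_add (by positivity)]
    ring_nf
    simp
  simp only [hinner, mul_comm _ (u1 y1)]
  set c := ∫ ξ in Set.Ioi (0 : ℝ), ξ ^ ((n1 : ℝ) / 2) * Real.exp (-(u1 y1 * ξ) / 2) * p ξ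
  set d := S221.det ^ (-(1 : ℝ) / 2) * (2 * π) ^ (-(n2 : ℝ) / 2)
  rw [← integral_sub_right_eq_self _ (μ21 y1)] at hmix
  simp only [Pi.sub_apply] at hmix
  simp only [show ∀ a b : ℝ, a * (c⁻¹ * (d * b)) = c⁻¹ * d * (a * b) by intros; ring]
  rw [integral_const_mul, hmix]
  linear_combination (c⁻¹ * S221 i j * ∫ ξ in Set.Ioi (0 : ℝ),
    ξ ^ ((n1 : ℝ) / 2 - 1) * Real.exp (-(u1 y1 * ξ) / 2) * p ξ) * hconst
end
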